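/- arXiv:1710.00451 — 2 statements merged into one kernel-verified Lean document; each statement's English description precedes it below -/
import Mathlib

section
/- Let N ≥ 1, let F : ℝ^N → ℝ be continuous, and let p > 1. Then F_p is continuously differentiable on (0,∞)^N, and for every κ ∈ (0,∞)^N and every k ∈ {1,…,N}, ∂_{κ_k} F_p(κ) = (N+1−k)/p + Σ_{j=k}^N (κ_k / τ_{j,p}(κ))^{p−1} · ∂_{κ_j} G_p(τ_{1,p}(κ), …, τ_{N,p}(κ)). -/
/-!
`F_p` is the composition of `G_p` with `τ_p`, plus a linear map, so everything reduces to `G_p`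
being `C¹` and to the partial derivatives of `τ_p`.

For `G_p`, Fubini slices the cube in the `i`-th coordinate (`integral_cube_eq`): up to the factor
`p ^ N`, `G_p(x)` is `∫ s in x_i..x_i + 1/p` of the integral of `F` over the slice of
`x + [0,1/p]^N` where the `i`-th coordinate is `s`. That slice does not depend on `x_i`, and its
integral is continuous, so by the fundamental theorem of calculus the `i`-th partial derivative is
the difference of the integrals over two opposite faces. These partial derivatives are continuous,
hence `G_p` is `C¹` (`hasFDerivAt_of_continuous_partials`, `contDiff_integral_cube`).

On the positive orthant the sums under the root in `τ_p` are positive, so `τ_p` is `C¹` there, with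
`∂_k τ_j = (κ_k / τ_j)^(p-1)` for `k ≤ j` and `0` otherwise (`fderiv_tauP`). The chain rule
concludes.
-/

open MeasureTheory

/-- The averaged function `G_p(κ) = p^N ∫_{[0,1/p]^N} F(κ + ζ) dζ`. -/
noncomputable def Gp (N : ℕ) (F : (Fin N → ℝ) → ℝ) (p : ℝ) (κ : Fin N → ℝ) : ℝ :=
  p ^ N * ∫ ζ in Set.Icc (0 : Fin N → ℝ) (fun _ => 1 / p), F (κ + ζ)

/-- `τ_{k,p}(κ) = (Σ_{l=0}^{k} κ_l^p)^{1/p}` (0-based indices). -/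
noncomputable def tauP (N : ℕ) (p : ℝ) (κ : Fin N → ℝ) (k : Fin N) : ℝ :=
  (∑ l ∈ Finset.Iic k, κ l ^ p) ^ (1 / p)

/-- `F_p(κ) = G_p(τ_{1,p}(κ),…,τ_{N,p}(κ)) + (1/p) Σ_k (N+1-k) κ_k`
(with 0-based indices, the coefficient `N+1-k` for `k ∈ {1,…,N}` becomes `N-k`). -/
noncomputable def FpReg (N : ℕ) (F : (Fin N → ℝ) → ℝ) (p : ℝ) (κ : Fin N → ℝ) : ℝ :=
  Gp N F p (tauP N p κ) + (1 / p) * ∑ k : Fin N, ((N : ℝ) - (k : ℕ)) * κ k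

/-- A function on `ℝⁿ` all of whose partial derivatives exist and are continuous is differentiable,
with the expected derivative. Induction on `n`, peeling off the first coordinate. -/
theorem hasFDerivAt_of_continuous_partials : ∀ (n : ℕ) (f : (Fin n → ℝ) → ℝ)
    (g : Fin n → (Fin n → ℝ) → ℝ) (_ : ∀ i, Continuous (g i))
    (_ : ∀ i x, HasDerivAt (fun t => f (Function.update x i t)) (g i x) (x i)) (x : Fin n → ℝ),
    HasFDerivAt f (∑ i, g i x • (ContinuousLinearMap.proj i : (Fin n → ℝ) →L[ℝ] ℝ)) x
  | 0, f, g, _, _, x => by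
    simpa using hasFDerivAt_of_subsingleton f x
  | n + 1, f, g, hg, hf, x => by
    have hcons : Continuous fun q : ℝ × (Fin n → ℝ) => (Fin.cons q.1 q.2 : Fin (n + 1) → ℝ) :=
      Continuous.finCons (A := fun _ => ℝ) continuous_fst continuous_snd
    let f₁ : ℝ → (Fin n → ℝ) → ℝ →L[ℝ] ℝ := fun a b =>
      ContinuousLinearMap.toSpanSingleton ℝ (g 0 (Fin.cons a b))
    let f₂ : ℝ → (Fin n → ℝ) → (Fin n → ℝ) →L[ℝ] ℝ := fun a b =>
      ∑ i : Fin n, g i.succ (Fin.cons a b) • ContinuousLinearMap.proj i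
    have key := hasStrictFDerivAt_uncurry_coprod (𝕜 := ℝ) (u := (x 0, Fin.tail x))
      (f := fun a b => f (Fin.cons a b)) (f₁ := f₁) (f₂ := f₂)
      (Filter.Eventually.of_forall fun v => by
        have h := hf 0 (Fin.cons v.1 v.2)
        simp only [Fin.update_cons_zero, Fin.cons_zero] at h
        exact h.hasFDerivAt)
      (Filter.Eventually.of_forall fun v =>
        hasFDerivAt_of_continuous_partials n (fun b => f (Fin.cons v.1 b))
          (fun i b => g i.succ (Fin.cons v.1 b))
          (fun i => (hg _).comp (continuous_const.finCons continuous_id))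
          (fun i b => by
            have h := hf i.succ (Fin.cons v.1 b)
            simpa only [← Fin.cons_update, Fin.cons_succ] using h) v.2)
      (by
        refine Continuous.continuousAt ?_
        have : Continuous fun q : ℝ × (Fin n → ℝ) => g 0 (Fin.cons q.1 q.2) := (hg 0).comp hcons
        exact (ContinuousLinearMap.toSpanSingletonCLE (𝕜 := ℝ) (E := ℝ)).continuous.comp this)
      (by
        refine Continuous.continuousAt ?_
        have : Continuous fun q : ℝ × (Fin n → ℝ) => ∑ i : Fin n, g i.succ (Fin.cons q.1 q.2) •
            (ContinuousLinearMap.proj i : (Fin n → ℝ) →L[ℝ] ℝ) :=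
          continuous_finsetSum _ fun i _ => ((hg i.succ).comp hcons).smul continuous_const
        exact this)
    let L : (Fin (n + 1) → ℝ) →L[ℝ] ℝ × (Fin n → ℝ) :=
      (ContinuousLinearMap.proj 0).prod
        (ContinuousLinearMap.pi fun i : Fin n => ContinuousLinearMap.proj i.succ)
    have h := HasFDerivAt.comp x (f := L) key.hasFDerivAt L.hasFDerivAt
    have e : (Function.HasUncurry.uncurry fun (a : ℝ) (b : Fin n → ℝ) =>
        f (Fin.cons a b)) ∘ L = f := by
      funext y
      exact congrArg f (Fin.cons_self_tail y)
    rw [e] at h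
    refine h.congr_fderiv ?_
    ext y
    simp [L, f₁, f₂, Function.HasUncurry.uncurry, Fin.sum_univ_succ, mul_comm]

/-- The integral of `F` over the cube `y + [0,c]^n`, placed in the hyperplane of `ℝ^(n+1)`
where the `i`-th coordinate equals `s`. -/
noncomputable def faceIntegral {n : ℕ} (F : (Fin (n + 1) → ℝ) → ℝ) (c : ℝ) (i : Fin (n + 1))
    (y : Fin n → ℝ) (s : ℝ) : ℝ :=
  ∫ η in Set.Icc (0 : Fin n → ℝ) (fun _ => c), F (i.insertNth s (y + η))

theorem continuous_faceIntegral {n : ℕ} {F : (Fin (n + 1) → ℝ) → ℝ} (hF : Continuous F) (c : ℝ)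
    (i : Fin (n + 1)) :
    Continuous fun q : (Fin n → ℝ) × ℝ => faceIntegral F c i q.1 q.2 := by
  refine continuous_parametric_integral_of_continuous
    (f := fun (q : (Fin n → ℝ) × ℝ) η => F (i.insertNth q.2 (q.1 + η))) ?_ isCompact_Icc
  refine hF.comp (Continuous.finInsertNth i (A := fun _ => ℝ) ?_ ?_) <;> fun_prop

/-- Fubini: the integral over a translated cube, sliced in the `i`-th coordinate. -/
theorem integral_cube_eq {n : ℕ} {F : (Fin (n + 1) → ℝ) → ℝ} (hF : Continuous F) {c : ℝ}
    (hc : 0 ≤ c) (i : Fin (n + 1)) (x : Fin (n + 1) → ℝ) :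
    ∫ ζ in Set.Icc (0 : Fin (n + 1) → ℝ) (fun _ => c), F (x + ζ) =
      ∫ s in x i..x i + c, faceIntegral F c i (i.removeNth x) s := by
  set e : ℝ × (Fin n → ℝ) ≃ᵐ (Fin (n + 1) → ℝ) :=
    (MeasurableEquiv.piFinSuccAbove (fun _ => ℝ) i).symm with he
  have hem : MeasurePreserving e :=
    (volume_preserving_piFinSuccAbove (fun _ : Fin (n + 1) => ℝ) i).symm _
  have heq : ∀ q, e q = i.insertNth q.1 q.2 := fun q => rfl
  have hpre : e ⁻¹' Set.Icc (0 : Fin (n + 1) → ℝ) (fun _ => c) =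
      Set.Icc (0 : ℝ) c ×ˢ Set.Icc (0 : Fin n → ℝ) (fun _ => c) := by
    ext q
    simp only [Set.mem_preimage, heq, Set.mem_prod]
    exact Fin.insertNth_mem_Icc
  have hcont : Continuous fun q : ℝ × (Fin n → ℝ) => F (x + e q) := by
    have : Continuous fun q : ℝ × (Fin n → ℝ) =>
        (i.insertNth q.1 q.2 : Fin (n + 1) → ℝ) :=
      Continuous.finInsertNth i (A := fun _ => ℝ) continuous_fst continuous_snd
    exact hF.comp (continuous_const.add this)
  have hadd : ∀ (s : ℝ) (η : Fin n → ℝ), x + e (s, η) =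
      i.insertNth (x i + s) (i.removeNth x + η) := by
    intro s η
    rw [heq]
    refine Fin.eq_insertNth_iff.2 ⟨?_, ?_⟩
    · simp
    · ext j; simp [Fin.removeNth]
  rw [← hem.setIntegral_preimage_emb e.measurableEmbedding, hpre, Measure.volume_eq_prod,
    setIntegral_prod _
      (hcont.continuousOn.integrableOn_compact (isCompact_Icc.prod isCompact_Icc)),
    integral_Icc_eq_integral_Ioc, ← intervalIntegral.integral_of_le hc]
  simp only [hadd]
  have := intervalIntegral.integral_comp_add_left (a := 0) (b := c)
    (fun s => faceIntegral F c i (i.removeNth x) s) (x i)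
  rw [add_zero] at this
  exact this

theorem contDiff_integral_cube {N : ℕ} {F : (Fin N → ℝ) → ℝ} (hF : Continuous F) {c : ℝ}
    (hc : 0 ≤ c) :
    ContDiff ℝ 1 fun x => ∫ ζ in Set.Icc (0 : Fin N → ℝ) (fun _ => c), F (x + ζ) := by
  cases N with
  | zero =>
    exact contDiff_one_iff_hasFDerivAt.2
      ⟨fun _ => 0, continuous_const, fun x => hasFDerivAt_of_subsingleton _ x⟩
  | succ n =>
    -- The `i`-th partial derivative is the difference of the integrals over two opposite faces.
    let g : Fin (n + 1) → (Fin (n + 1) → ℝ) → ℝ := fun i x =>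
      faceIntegral F c i (i.removeNth x) (x i + c) - faceIntegral F c i (i.removeNth x) (x i)
    have hrem : ∀ i : Fin (n + 1), Continuous fun x : Fin (n + 1) → ℝ => i.removeNth x := by
      intro i
      exact continuous_pi fun j => continuous_apply _
    have hg : ∀ i, Continuous (g i) := by
      intro i
      have h := continuous_faceIntegral hF c i
      exact (h.comp ((hrem i).prodMk ((continuous_apply i).add continuous_const))).sub
        (h.comp ((hrem i).prodMk (continuous_apply i)))
    refine contDiff_one_iff_hasFDerivAt.2 ⟨_, ?_,
      hasFDerivAt_of_continuous_partials (n + 1) _ g hg ?_⟩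
    · exact continuous_finsetSum _ fun i _ => (hg i).smul continuous_const
    · intro i x
      simp only [integral_cube_eq hF hc i, Function.update_self, Fin.removeNth_update]
      have hφ : Continuous (faceIntegral F c i (i.removeNth x)) :=
        (continuous_faceIntegral hF c i).comp (Continuous.prodMk_right _)
      have hprim : ∀ t, HasDerivAt (fun u => ∫ s in (0 : ℝ)..u,
          faceIntegral F c i (i.removeNth x) s) (faceIntegral F c i (i.removeNth x) t) t :=
        fun t => hφ.integral_hasStrictDerivAt 0 t |>.hasDerivAt
      have h := ((hprim (x i + c)).comp_add_const (x i) c).sub (hprim (x i))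
      refine h.congr_of_eventuallyEq (Filter.Eventually.of_forall fun t => ?_)
      exact (intervalIntegral.integral_interval_sub_left (hφ.intervalIntegrable _ _)
        (hφ.intervalIntegrable _ _)).symm

theorem contDiff_Gp {N : ℕ} {F : (Fin N → ℝ) → ℝ} (hF : Continuous F) {p : ℝ} (hp : 1 < p) :
    ContDiff ℝ 1 (Gp N F p) :=
  contDiff_const.mul (contDiff_integral_cube hF (by positivity))

theorem sum_rpow_pos {N : ℕ} {κ : Fin N → ℝ} (hκ : ∀ i, 0 < κ i) (p : ℝ) (j : Fin N) :
    0 < ∑ l ∈ Finset.Iic j, κ l ^ p :=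
  Finset.sum_pos (fun l _ => Real.rpow_pos_of_pos (hκ l) p) ⟨j, by simp⟩

theorem contDiffAt_tauP {N : ℕ} {p : ℝ} {κ : Fin N → ℝ} (hκ : ∀ i, 0 < κ i) :
    ContDiffAt ℝ 1 (tauP N p) κ := by
  refine contDiffAt_pi.2 fun j => ?_
  refine ContDiffAt.rpow_const_of_ne ?_ (sum_rpow_pos hκ p j).ne'
  exact ContDiffAt.sum fun l _ =>
    ContDiffAt.rpow_const_of_ne (contDiff_apply ℝ ℝ l).contDiffAt (hκ l).ne'

theorem fderiv_tauP {N : ℕ} {p : ℝ} (hp : 1 < p) {κ : Fin N → ℝ} (hκ : ∀ i, 0 < κ i)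
    (k j : Fin N) :
    fderiv ℝ (tauP N p) κ (Pi.single k 1) j =
      if k ≤ j then (κ k / tauP N p κ j) ^ (p - 1) else 0 := by
  have hp0 : p ≠ 0 := by positivity
  have hS := sum_rpow_pos hκ p j
  have h1 : HasFDerivAt (fun κ : Fin N → ℝ => ∑ l ∈ Finset.Iic j, κ l ^ p)
      (∑ l ∈ Finset.Iic j, (p * κ l ^ (p - 1)) •
        (ContinuousLinearMap.proj l : (Fin N → ℝ) →L[ℝ] ℝ)) κ :=
    HasFDerivAt.fun_sum fun l _ =>
      (hasFDerivAt_apply l κ).rpow_const (Or.inl (hκ l).ne')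
  have h2 := h1.rpow_const (p := 1 / p) (Or.inl hS.ne')
  have h3 := hasFDerivAt_pi'.1
    ((contDiffAt_tauP (p := p) hκ).differentiableAt one_ne_zero).hasFDerivAt j
  have h4 := congrArg (fun A : (Fin N → ℝ) →L[ℝ] ℝ => A (Pi.single k 1)) (h3.unique h2)
  simp only [ContinuousLinearMap.comp_apply, ContinuousLinearMap.proj_apply,
    smul_apply, sum_apply, smul_eq_mul, Pi.single_apply,
    mul_ite, mul_one, mul_zero, Finset.sum_ite_eq', Finset.mem_Iic] at h4
  rw [h4]
  split_ifs with hkj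
  · have ht : tauP N p κ j = (∑ l ∈ Finset.Iic j, κ l ^ p) ^ (1 / p) := rfl
    rw [ht, Real.div_rpow (hκ k).le (Real.rpow_nonneg hS.le _), ← Real.rpow_mul hS.le,
      div_eq_mul_inv (κ k ^ (p - 1)), ← Real.rpow_neg hS.le,
      show -(1 / p * (p - 1)) = 1 / p - 1 by field_simp; ring]
    field_simp
  · rfl

/-- For `F` continuous and `p > 1`, `F_p` is continuously differentiable on
`(0,∞)^N`, with `∂_{κ_k} F_p(κ) = (N+1−k)/p + Σ_{j≥k} (κ_k/τ_{j,p}(κ))^{p−1} ∂_{κ_j} G_p(τ(κ))`. -/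
theorem stmt_5 (N : ℕ) (hN : 1 ≤ N) (F : (Fin N → ℝ) → ℝ)
    (hFc : Continuous F) (p : ℝ) (hp : 1 < p) :
    ContDiffOn ℝ 1 (FpReg N F p) {κ : Fin N → ℝ | ∀ i, 0 < κ i} ∧
    ∀ κ : Fin N → ℝ, (∀ i, 0 < κ i) → ∀ k : Fin N,
      fderiv ℝ (FpReg N F p) κ (Pi.single k 1) =
        ((N : ℝ) - (k : ℕ)) / p +
          ∑ j ∈ Finset.Ici k, (κ k / tauP N p κ j) ^ (p - 1) *
            fderiv ℝ (Gp N F p) (tauP N p κ) (Pi.single j 1) := by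
  have hG := contDiff_Gp hFc hp
  let L : (Fin N → ℝ) →L[ℝ] ℝ := (1 / p) • ∑ k : Fin N, ((N : ℝ) - (k : ℕ)) •
    (ContinuousLinearMap.proj k : (Fin N → ℝ) →L[ℝ] ℝ)
  have hFp : FpReg N F p = fun κ => (Gp N F p ∘ tauP N p) κ + L κ := by
    funext κ
    simp [FpReg, L]
  refine ⟨fun κ hκ => ?_, fun κ hκ k => ?_⟩
  · rw [hFp]
    exact ((hG.contDiffAt.comp κ (contDiffAt_tauP hκ)).add L.contDiff.contDiffAt).contDiffWithinAt
  · have hτ := ((contDiffAt_tauP (p := p) hκ).differentiableAt one_ne_zero).hasFDerivAt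
    have hGd := ((hG.contDiffAt (x := tauP N p κ)).differentiableAt one_ne_zero).hasFDerivAt
    have hd := (hGd.comp κ hτ).add L.hasFDerivAt
    have hv : fderiv ℝ (tauP N p) κ (Pi.single k 1) =
        ∑ j ∈ Finset.Ici k, (κ k / tauP N p κ j) ^ (p - 1) • (Pi.single j 1 : Fin N → ℝ) := by
      ext j
      simp [fderiv_tauP hp hκ, Finset.sum_apply, Pi.single_apply]
    have hL : L (Pi.single k 1) = ((N : ℝ) - (k : ℕ)) / p := by
      simp [L, Pi.single_apply, div_eq_inv_mul]
    rw [hFp, HasFDerivAt.fderiv (f := fun κ => (Gp N F p ∘ tauP N p) κ + L κ) hd,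
      add_apply, ContinuousLinearMap.comp_apply, hv, hL, map_sum, add_comm]
    simp only [map_smul, smul_eq_mul]
end

section
/- Let N ≥ 2, let F : ℝ^N → ℝ be continuous and nondecreasing in each variable, let p > 1, and let κ ∈ (0,∞)^N satisfy κ_k = κ_{k+1} for some 1 ≤ k < N. Then ∂_{κ_k} F_p(κ) − ∂_{κ_{k+1}} F_p(κ) ≥ 1/p > 0; that is, at points where two consecutive coordinates coincide, the partial derivative of F_p in the lower index is strictly larger than in the higher index. -/
/-!
Since `F` is continuous, its average over a cube is `C¹`: by Fubini the partial derivative in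
direction `i` is a difference of two integrals of `F` over opposite faces of the cube, which is
continuous in the base point (`hasDerivAt_box`), and continuous partial derivatives give Fréchet
differentiability (`hasFDerivAt_of_partials`). As `G_p` is also monotone, its derivative is
nonnegative on nonnegative vectors (`fderiv_Gp_nonneg`).

Along `v = e_k - e_{k+1}`, the derivative of `τ_j` is a positive multiple of
`∑_{l ≤ j} κ_l^{p-1} v_l`. When `κ_k = κ_{k+1}` this sum is `κ_k^{p-1}` for `j = k` and `0`
otherwise, hence nonnegative (`tauP_hasFDerivAt`). By the chain rule, `G_p ∘ τ` contributes a
nonnegative amount to the derivative of `F_p` along `v`, while the linear term contributes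
exactly `1/p`.
-/

open MeasureTheory

open MeasureTheory

/-- A function on `ℝⁿ` with continuous partial derivatives is Fréchet differentiable, by induction
on `n` from the two-block version for products. -/
lemma hasFDerivAt_of_partials : ∀ (n : ℕ) (g : (Fin n → ℝ) → ℝ) (D : Fin n → (Fin n → ℝ) → ℝ),
    (∀ i, Continuous (D i)) →
    (∀ i x, HasDerivAt (fun t => g (Function.update x i t)) (D i x) (x i)) →
    ∀ x, HasFDerivAt g
      (∑ i, D i x • (ContinuousLinearMap.proj i : (Fin n → ℝ) →L[ℝ] ℝ)) x := by
  intro n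
  induction n with
  | zero =>
    intro g D _ _ x
    simpa using hasFDerivAt_of_subsingleton g x
  | succ n ih =>
    intro g D hD hg x
    let f : ℝ → (Fin n → ℝ) → ℝ := fun t y => g (Fin.cons t y)
    let f₁ : ℝ → (Fin n → ℝ) → ℝ →L[ℝ] ℝ := fun t y =>
      ContinuousLinearMap.toSpanSingleton ℝ (D 0 (Fin.cons t y))
    let f₂ : ℝ → (Fin n → ℝ) → (Fin n → ℝ) →L[ℝ] ℝ := fun t y =>
      ∑ i, D i.succ (Fin.cons t y) • (ContinuousLinearMap.proj i : (Fin n → ℝ) →L[ℝ] ℝ)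
    have hcons : Continuous (fun v : ℝ × (Fin n → ℝ) => (Fin.cons v.1 v.2 : Fin (n+1) → ℝ)) := by
      exact (Fin.consEquivL ℝ (fun _ : Fin (n+1) => ℝ)).continuous
    have h1 : ∀ v : ℝ × (Fin n → ℝ), HasFDerivAt (f · v.2) ((↿f₁) v) v.1 := by
      rintro ⟨t, y⟩
      have := hg 0 (Fin.cons t y)
      simp only [Fin.update_cons_zero, Fin.cons_zero] at this
      exact this.hasFDerivAt
    have h2 : ∀ v : ℝ × (Fin n → ℝ), HasFDerivAt (f v.1 ·) ((↿f₂) v) v.2 := by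
      rintro ⟨t, y⟩
      refine ih (fun y => g (Fin.cons t y)) (fun i y => D i.succ (Fin.cons t y)) ?_ ?_ y
      · intro i
        exact (hD i.succ).comp (hcons.comp (by fun_prop : Continuous fun y => (t, y)))
      · intro i y
        have := hg i.succ (Fin.cons t y)
        simpa only [Fin.cons_succ, ← Fin.cons_update] using this
    have c1 : Continuous ↿f₁ := by
      have : Continuous (fun v : ℝ × (Fin n → ℝ) => D 0 (Fin.cons v.1 v.2)) := (hD 0).comp hcons
      exact (ContinuousLinearMap.toSpanSingletonCLE :
        ℝ ≃L[ℝ] (ℝ →L[ℝ] ℝ)).continuous.comp this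
    have c2 : Continuous ↿f₂ := by
      change Continuous fun v : ℝ × (Fin n → ℝ) => ∑ i, D i.succ (Fin.cons v.1 v.2) •
        (ContinuousLinearMap.proj i : (Fin n → ℝ) →L[ℝ] ℝ)
      refine continuous_finsetSum _ fun i _ => ?_
      exact ((hD i.succ).comp hcons).smul continuous_const
    have key := hasStrictFDerivAt_uncurry_coprod (𝕜 := ℝ) (u := (x 0, Fin.tail x)) (f := f)
      (f₁ := f₁) (f₂ := f₂) (.of_forall h1) (.of_forall h2) c1.continuousAt c2.continuousAt
    have e := (Fin.consEquivL ℝ (fun _ : Fin (n+1) => ℝ)).symm.hasFDerivAt (x := x)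
    have hx : (Fin.consEquivL ℝ (fun _ : Fin (n+1) => ℝ)).symm x = (x 0, Fin.tail x) := rfl
    have := HasFDerivAt.comp x (hx ▸ key.hasFDerivAt) e
    have hgf : (↿f ∘ (Fin.consEquivL ℝ (fun _ : Fin (n+1) => ℝ)).symm) = g := by
      funext y
      change g (Fin.cons (y 0) (Fin.tail y)) = g y
      rw [Fin.cons_self_tail]
    rw [hgf] at this
    refine this.congr_fderiv ?_
    ext v
    have hv : (Fin.consEquivL ℝ (fun _ : Fin (n+1) => ℝ)).symm v = (v 0, Fin.tail v) := rfl
    simp [hv, Function.HasUncurry.uncurry, f₁, f₂, Fin.sum_univ_succ, Fin.tail, mul_comm]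

/-- Fubini on a cube of side `a`, with the `i`-th variable split off. -/
lemma box_split (n : ℕ) (F : (Fin (n+1) → ℝ) → ℝ) (hF : Continuous F) (a : ℝ) (ha : 0 ≤ a)
    (i : Fin (n+1)) (x : Fin (n+1) → ℝ) :
    ∫ ζ in Set.Icc (0 : Fin (n+1) → ℝ) (fun _ => a), F (x + ζ) =
      ∫ s in (0:ℝ)..a, ∫ ζ in Set.Icc (0 : Fin n → ℝ) (fun _ => a),
        F (Function.update x i (x i + s) + i.insertNth 0 ζ) := by
  set e : ℝ × (Fin n → ℝ) ≃ᵐ (Fin (n+1) → ℝ) :=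
    (MeasurableEquiv.piFinSuccAbove (fun _ => ℝ) i).symm with he
  have hem : MeasurePreserving e :=
    (volume_preserving_piFinSuccAbove (fun _ : Fin (n + 1) => ℝ) i).symm _
  have hepre : (e ⁻¹' Set.Icc 0 fun _ => a) =
      Set.Icc 0 a ×ˢ Set.Icc (0 : Fin n → ℝ) fun _ => a :=
    ((Fin.insertNthOrderIso (fun _ => ℝ) i).preimage_Icc _ _).trans (Set.Icc_prod_eq _ _)
  have hec : ∀ s ζ, e (s, ζ) = i.insertNth s ζ := fun s ζ => rfl
  have hcont : Continuous (fun q : ℝ × (Fin n → ℝ) => F (x + e q)) := by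
    refine hF.comp (continuous_const.add ?_)
    exact Continuous.finInsertNth (A := fun _ => ℝ) i continuous_fst continuous_snd
  rw [← hem.map_eq, setIntegral_map_equiv, hepre, Measure.volume_eq_prod, setIntegral_prod,
    intervalIntegral.integral_of_le ha, Measure.restrict_congr_set Ioc_ae_eq_Icc]
  · refine setIntegral_congr_fun measurableSet_Icc fun s _ => ?_
    refine setIntegral_congr_fun measurableSet_Icc fun ζ _ => ?_
    simp only [hec]
    congr 1
    funext j
    refine Fin.succAboveCases i ?_ (fun j => ?_) j <;> simp
  · exact (hcont.continuousOn).integrableOn_compact (isCompact_Icc.prod isCompact_Icc)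

/-- The integral of `F` over the face of the cube `y + [0, a]^(n+1)` that contains `y` and is
orthogonal to direction `i`. -/
noncomputable def face (n : ℕ) (F : (Fin (n+1) → ℝ) → ℝ) (a : ℝ) (i : Fin (n+1))
    (y : Fin (n+1) → ℝ) : ℝ :=
  ∫ ζ in Set.Icc (0 : Fin n → ℝ) (fun _ => a), F (y + i.insertNth 0 ζ)

lemma face_continuous (n : ℕ) (F : (Fin (n+1) → ℝ) → ℝ) (hF : Continuous F) (a : ℝ)
    (i : Fin (n+1)) : Continuous (face n F a i) := by
  refine continuous_parametric_integral_of_continuous (μ := volume)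
    (f := fun (y : Fin (n+1) → ℝ) (ζ : Fin n → ℝ) => F (y + i.insertNth 0 ζ)) ?_ isCompact_Icc
  refine hF.comp (continuous_fst.add ?_)
  exact Continuous.finInsertNth (A := fun _ => ℝ) i continuous_const continuous_snd

/-- The partial derivative of the cube integral is a difference of two face integrals. -/
lemma hasDerivAt_box (n : ℕ) (F : (Fin (n+1) → ℝ) → ℝ) (hF : Continuous F) (a : ℝ) (ha : 0 ≤ a)
    (i : Fin (n+1)) (x : Fin (n+1) → ℝ) :
    HasDerivAt (fun t => ∫ ζ in Set.Icc (0 : Fin (n+1) → ℝ) (fun _ => a),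
        F (Function.update x i t + ζ))
      (face n F a i (Function.update x i (x i + a)) - face n F a i x) (x i) := by
  have hφ : Continuous (fun s => face n F a i (Function.update x i s)) :=
    (face_continuous n F hF a i).comp (continuous_const.update i continuous_id)
  have h1 : (fun t => ∫ ζ in Set.Icc (0 : Fin (n+1) → ℝ) (fun _ => a),
        F (Function.update x i t + ζ)) =
      fun t => (∫ s in (0:ℝ)..(t + a), face n F a i (Function.update x i s)) -
        ∫ s in (0:ℝ)..t, face n F a i (Function.update x i s) := by
    funext t
    rw [box_split n F hF a ha i, intervalIntegral.integral_interval_sub_left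
      (hφ.intervalIntegrable _ _) (hφ.intervalIntegrable _ _)]
    simp only [Function.update_self, Function.update_idem]
    have := intervalIntegral.integral_comp_add_left (a := 0) (b := a)
      (fun s => face n F a i (Function.update x i s)) t
    simpa [face] using this
  rw [h1]
  have d1 := (hφ.integral_hasStrictDerivAt 0 (x i + a)).hasDerivAt.comp_add_const (x i) a
  have d2 := (hφ.integral_hasStrictDerivAt 0 (x i)).hasDerivAt
  simpa using d1.fun_sub d2

lemma Gp_differentiable (N : ℕ) (F : (Fin N → ℝ) → ℝ) (hF : Continuous F) (p : ℝ) (hp : 0 < p) :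
    Differentiable ℝ (Gp N F p) := by
  cases N with
  | zero => exact fun x => (hasFDerivAt_of_subsingleton _ x).differentiableAt
  | succ n =>
    have ha : 0 ≤ 1 / p := by positivity
    have hb : Differentiable ℝ (fun x => ∫ ζ in Set.Icc (0 : Fin (n+1) → ℝ) (fun _ => 1 / p),
        F (x + ζ)) := fun x =>
      (hasFDerivAt_of_partials (n+1) _
        (fun i x => face n F (1/p) i (Function.update x i (x i + 1/p)) - face n F (1/p) i x)
        (fun i => ((face_continuous n F hF (1/p) i).comp
          (continuous_id.update i ((continuous_apply i).add continuous_const))).sub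
          (face_continuous n F hF (1/p) i))
        (fun i x => hasDerivAt_box n F hF (1/p) ha i x) x).differentiableAt
    exact hb.const_mul _

lemma fderiv_Gp_nonneg (N : ℕ) (F : (Fin N → ℝ) → ℝ) (hF : Continuous F)
    (hFmono : ∀ κ q : Fin N → ℝ, (∀ i, 0 ≤ q i) → F κ ≤ F (κ + q))
    (p : ℝ) (hp : 0 < p) (x q : Fin N → ℝ) (hq : ∀ i, 0 ≤ q i) :
    0 ≤ fderiv ℝ (Gp N F p) x q := by
  have hmono : Monotone (fun t : ℝ => Gp N F p (x + t • q)) := by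
    intro s t hst
    simp only [Gp]
    refine mul_le_mul_of_nonneg_left ?_ (by positivity)
    refine setIntegral_mono ?_ ?_ fun ζ => ?_
    · exact (by fun_prop : Continuous fun ζ => F (x + s • q + ζ)).continuousOn.integrableOn_compact
        isCompact_Icc
    · exact (by fun_prop : Continuous fun ζ => F (x + t • q + ζ)).continuousOn.integrableOn_compact
        isCompact_Icc
    · have := hFmono (x + s • q + ζ) ((t - s) • q)
        (fun i => mul_nonneg (sub_nonneg.2 hst) (hq i))
      have hsum : x + s • q + ζ + (t - s) • q = x + t • q + ζ := by
        rw [sub_smul]; abel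
      rwa [hsum] at this
  have hl : HasLineDerivAt ℝ (Gp N F p) (fderiv ℝ (Gp N F p) x q) x q :=
    (Gp_differentiable N F hF p hp x).hasFDerivAt.hasLineDerivAt q
  have hd : HasDerivAt (fun t : ℝ => Gp N F p (x + t • q)) (fderiv ℝ (Gp N F p) x q) 0 := hl
  rw [← hd.deriv]
  exact hmono.deriv_nonneg

/-- `τ` is differentiable at points of the positive orthant, and where `κ_k = κ_{k+1}` its derivative
along `e_k - e_{k+1}` is coordinatewise nonnegative. -/
lemma tauP_hasFDerivAt (N : ℕ) (p : ℝ) (hp : 1 < p) (κ : Fin N → ℝ) (hpos : ∀ i, 0 < κ i)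
    (k k' : Fin N) (hk : (k' : ℕ) = (k : ℕ) + 1) (hκ : κ k = κ k') :
    ∃ T : (Fin N → ℝ) →L[ℝ] (Fin N → ℝ), HasFDerivAt (tauP N p) T κ ∧
      ∀ j, 0 ≤ T (Pi.single k 1 - Pi.single k' 1) j := by
  have hS : ∀ j, 0 < ∑ l ∈ Finset.Iic j, κ l ^ p := fun j =>
    Finset.sum_pos (fun l _ => Real.rpow_pos_of_pos (hpos l) p) ⟨j, by simp⟩
  have hd : ∀ j, HasFDerivAt (fun κ => tauP N p κ j)
      ((1 / p * (∑ l ∈ Finset.Iic j, κ l ^ p) ^ (1 / p - 1)) •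
        ∑ l ∈ Finset.Iic j, (p * κ l ^ (p - 1)) •
          (ContinuousLinearMap.proj l : (Fin N → ℝ) →L[ℝ] ℝ)) κ := by
    intro j
    refine HasFDerivAt.rpow_const ?_ (Or.inl (hS j).ne')
    refine HasFDerivAt.fun_sum fun l _ => ?_
    exact HasFDerivAt.rpow_const (ContinuousLinearMap.proj l :
      (Fin N → ℝ) →L[ℝ] ℝ).hasFDerivAt (Or.inl (hpos l).ne')
  refine ⟨ContinuousLinearMap.pi _, hasFDerivAt_pi.2 hd, fun j => ?_⟩
  have hle : k' ≤ j → k ≤ j := fun h => by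
    rw [Fin.le_def] at h ⊢; omega
  have hp0 : 0 < p := by linarith
  have hc : 0 ≤ p * κ k' ^ (p - 1) := by have := hpos k'; positivity
  have hS' := hS j
  simp only [ContinuousLinearMap.pi_apply, _root_.smul_apply,
    _root_.sum_apply, ContinuousLinearMap.proj_apply, smul_eq_mul, Pi.sub_apply]
  refine mul_nonneg (by positivity) ?_
  simp only [mul_sub, Finset.sum_sub_distrib, Pi.single_apply, mul_ite, mul_one, mul_zero,
    Finset.sum_ite_eq', Finset.mem_Iic, hκ]
  by_cases h' : k' ≤ j
  · simp [h', hle h']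
  · by_cases h : k ≤ j <;> simp [h, h', hc]

/-- For `F` continuous and nondecreasing in each variable, `p > 1`, and
`κ ∈ (0,∞)^N` with `κ_k = κ_{k+1}` for two consecutive indices, one has
`∂_{κ_k} F_p(κ) − ∂_{κ_{k+1}} F_p(κ) ≥ 1/p > 0`. -/
theorem stmt_7 (N : ℕ) (hN : 2 ≤ N) (F : (Fin N → ℝ) → ℝ)
    (hFc : Continuous F)
    (hFmono : ∀ κ q : Fin N → ℝ, (∀ i, 0 ≤ q i) → F κ ≤ F (κ + q))
    (p : ℝ) (hp : 1 < p)
    (κ : Fin N → ℝ) (hpos : ∀ i, 0 < κ i)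
    (k k' : Fin N) (hk : (k' : ℕ) = (k : ℕ) + 1) (hκ : κ k = κ k') :
    1 / p ≤ fderiv ℝ (FpReg N F p) κ (Pi.single k 1) -
        fderiv ℝ (FpReg N F p) κ (Pi.single k' 1) ∧
      0 < 1 / p := by
  have hp0 : 0 < p := by linarith
  refine ⟨?_, by positivity⟩
  obtain ⟨T, hT, hTnn⟩ := tauP_hasFDerivAt N p hp κ hpos k k' hk hκ
  have hG := (Gp_differentiable N F hFc p hp0 (tauP N p κ)).hasFDerivAt.comp κ hT
  let L : (Fin N → ℝ) →L[ℝ] ℝ := (1 / p) • ∑ j : Fin N, ((N : ℝ) - (j : ℕ)) •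
    (ContinuousLinearMap.proj j : (Fin N → ℝ) →L[ℝ] ℝ)
  have hL : ∀ x, L x = (1 / p) * ∑ j : Fin N, ((N : ℝ) - (j : ℕ)) * x j := fun x => by
    simp [L]
  have hF : FpReg N F p = Gp N F p ∘ tauP N p + ⇑L := by
    funext x
    rw [Pi.add_apply, hL]; rfl
  have hd : HasFDerivAt (FpReg N F p) _ κ := hF ▸ hG.add L.hasFDerivAt
  rw [hd.fderiv, ← map_sub]
  have h1 := fderiv_Gp_nonneg N F hFc hFmono p hp0 (tauP N p κ) _ hTnn
  have h2 : L (Pi.single k 1 - Pi.single k' 1) = 1 / p := by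
    rw [hL]
    simp only [Pi.sub_apply, mul_sub, Finset.sum_sub_distrib, Pi.single_apply, mul_ite, mul_one,
      mul_zero, Finset.sum_ite_eq', Finset.mem_univ, if_true, hk]
    push_cast
    ring
  rw [_root_.add_apply, h2]
  exact le_add_of_nonneg_left h1
end
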